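/- If the compatibility graph of a set T of n-qubit Pauli operators is a disjoint union of cliques (equivalently, if commutation is a transitive relation on T), then T is noncontextual. -/

import Mathlib

/-!
Distinct cliques of the compatibility graph anticommute elementwise, because two Pauli operators
either commute or anticommute. Pick a representative `R` in each clique. For `M` in the clique of
`R`, the operator `z_M = R * M` is an involution that commutes with all of `T`, so the `z_M`
generate a commutative monoid, and `M = R * z_M`. By induction, the label of a determining tree is
`a * ∏ z_M`, the product running over its leaves, where `a` is `1` or a representative: the
children of a node commute, hence so do their `a`-parts, and two commuting elements of
`{1} ∪ {representatives}` are equal (with product `1`) or one of them is `1`. This is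
`PTree.Valid.label_eq`.

Since each `z_M` is an involution, `∏ z_M` depends only on the determining set
(`prod_map_eq_of_odd_count_iff`). So trees for `A` and `-A` with the same determining set would give
`a = -b` with `a` and `b` in `{1} ∪ {representatives}`. If `T` has at least two cliques, this is
impossible: `a` and `b` would commute, so would be equal or include `1`, and `-1` is not a
representative because it commutes with everything. If `T` is commutative, `-1` may lie in `T`;
the same argument then runs with `1` as the only representative.
-/

open Matrix

/-- Index type for `n` qubits: `Fin n → Fin 2` has cardinality `2^n`. -/
abbrev QubitIdx (n : ℕ) := Fin n → Fin 2

/-- `2^n × 2^n` complex matrices. -/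
abbrev Mat (n : ℕ) := Matrix (QubitIdx n) (QubitIdx n) ℂ

/-- The four single-qubit Pauli matrices `I, X, Y, Z`. -/
noncomputable def pauliMat : Fin 4 → Matrix (Fin 2) (Fin 2) ℂ :=
  ![1, !![0, 1; 1, 0], !![0, -Complex.I; Complex.I, 0], !![1, 0; 0, -1]]

/-- The tensor product `P₁ ⊗ ⋯ ⊗ Pₙ` of single-qubit Pauli matrices. -/
noncomputable def pauliTensor (n : ℕ) (f : Fin n → Fin 4) : Mat n :=
  fun i k => ∏ j, pauliMat (f j) (i j) (k j)

/-- An `n`-qubit Pauli operator: `ε • P₁ ⊗ ⋯ ⊗ Pₙ` with `ε ∈ {1, -1}`. -/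
def IsPauli (n : ℕ) (M : Mat n) : Prop :=
  ∃ (ε : ℂ) (f : Fin n → Fin 4), (ε = 1 ∨ ε = -1) ∧ M = ε • pauliTensor n f

/-- Two operators anticommute. -/
def PAntiCommute {n : ℕ} (A B : Mat n) : Prop := A * B = -(B * A)

/-- Finite rooted trees whose nodes are labeled by `2^n × 2^n` matrices.
A `leaf` has no children; a `node` has a (finite) list of children. -/
inductive PTree (n : ℕ) : Type
  | leaf : Mat n → PTree n
  | node : Mat n → List (PTree n) → PTree n

namespace PTree

variable {n : ℕ}

/-- The label of the root of the tree. -/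
def label : PTree n → Mat n
  | leaf M => M
  | node M _ => M

mutual
/-- The multiset of leaf labels of the tree. -/
def leaves : PTree n → Multiset (Mat n)
  | .leaf M => {M}
  | .node _ cs => leavesList cs
/-- The multiset of leaf labels of a list of trees. -/
def leavesList : List (PTree n) → Multiset (Mat n)
  | [] => 0
  | c :: cs => c.leaves + leavesList cs
end

mutual
/-- The list of leaf labels of the tree in depth-first (left-to-right) order. -/
def leafList : PTree n → List (Mat n)
  | .leaf M => [M]
  | .node _ cs => leafListList cs
/-- The list of leaf labels of a list of trees, in depth-first order. -/
def leafListList : List (PTree n) → List (Mat n)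
  | [] => []
  | c :: cs => c.leafList ++ leafListList cs
end

mutual
/-- The multiset of all node labels of the tree. -/
def nodeLabels : PTree n → Multiset (Mat n)
  | .leaf M => {M}
  | .node M cs => M ::ₘ nodeLabelsList cs
/-- The multiset of all node labels of a list of trees. -/
def nodeLabelsList : List (PTree n) → Multiset (Mat n)
  | [] => 0
  | c :: cs => c.nodeLabels + nodeLabelsList cs
end

/-- The multiset of labels of all nodes at depth ≥ 2, i.e. strictly below
the children of the root. -/
def deepLabels : PTree n → Multiset (Mat n)
  | .leaf _ => 0
  | .node _ cs => (cs.map fun c =>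
      match c with
      | .leaf _ => (0 : Multiset (Mat n))
      | .node _ cs' => nodeLabelsList cs').sum

/-- A valid determining tree over a set `S`: every leaf is labeled by an
element of `S`, every node is labeled by a Pauli operator, and for every
internal node, the labels of its children pairwise commute and the label of
the node is the matrix product of the labels of its children. -/
inductive Valid (S : Set (Mat n)) : PTree n → Prop
  | leaf {M : Mat n} : M ∈ S → Valid S (PTree.leaf M)
  | node {M : Mat n} {cs : List (PTree n)} :
      IsPauli n M →
      M = (cs.map label).prod →
      cs.Pairwise (fun a b => Commute a.label b.label) →
      (∀ c ∈ cs, Valid S c) →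
      Valid S (PTree.node M cs)

/-- Every internal node of the tree has at most two children. -/
inductive Binary : PTree n → Prop
  | leaf (M : Mat n) : Binary (PTree.leaf M)
  | node (M : Mat n) (cs : List (PTree n)) :
      cs.length ≤ 2 → (∀ c ∈ cs, Binary c) → Binary (PTree.node M cs)

open scoped Classical in
/-- The determining set of a tree: the set of operators occurring with odd
total multiplicity among its leaves. -/
noncomputable def detSet (τ : PTree n) : Set (Mat n) :=
  {M | Odd (τ.leaves.count M)}

end PTree

/-- `τ` is a determining tree for `A` over `S`. -/
def IsDetTree {n : ℕ} (S : Set (Mat n)) (A : Mat n) (τ : PTree n) : Prop :=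
  PTree.Valid S τ ∧ τ.label = A

/-- A set `S` of Pauli operators is contextual if for some Pauli operator `A`
there are determining trees for `A` and for `-A` over `S` with identical
determining sets. -/
def Contextual (n : ℕ) (S : Set (Mat n)) : Prop :=
  ∃ (A : Mat n) (τ τ' : PTree n), IsPauli n A ∧
    IsDetTree S A τ ∧ IsDetTree S (-A) τ' ∧ τ.detSet = τ'.detSet

/-! ### Products of Pauli operators -/

lemma pauliMat_mul_self (a : Fin 4) : pauliMat a * pauliMat a = 1 := by
  fin_cases a <;> ext i j <;> fin_cases i <;> fin_cases j <;>
    simp [pauliMat, Matrix.mul_apply]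

lemma pauliMat_mul_comm_or (a b : Fin 4) : ∃ s : ℂ, (s = 1 ∨ s = -1) ∧
    pauliMat a * pauliMat b = s • (pauliMat b * pauliMat a) := by
  by_cases h : a = 0 ∨ b = 0 ∨ a = b
  · refine ⟨1, Or.inl rfl, ?_⟩
    rcases h with rfl | rfl | rfl <;> simp [pauliMat]
  · refine ⟨-1, Or.inr rfl, ?_⟩
    fin_cases a <;> fin_cases b <;> simp at h <;> ext i j <;> fin_cases i <;> fin_cases j <;>
      simp [pauliMat, Matrix.mul_apply]

lemma pauliTensor_mul_apply {n : ℕ} (f g : Fin n → Fin 4) (i k : QubitIdx n) :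
    (pauliTensor n f * pauliTensor n g) i k =
      ∏ q, (pauliMat (f q) * pauliMat (g q)) (i q) (k q) := by
  simp only [Matrix.mul_apply, pauliTensor, ← Finset.prod_mul_distrib]
  rw [Finset.prod_univ_sum, Fintype.piFinset_univ]

lemma pauliTensor_mul_self {n : ℕ} (f : Fin n → Fin 4) :
    pauliTensor n f * pauliTensor n f = 1 := by
  ext i k
  rw [pauliTensor_mul_apply]
  simp only [pauliMat_mul_self]
  by_cases h : i = k
  · subst h; simp
  · obtain ⟨q, hq⟩ := Function.ne_iff.mp h
    rw [Matrix.one_apply_ne h]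
    exact Finset.prod_eq_zero (Finset.mem_univ q) (Matrix.one_apply_ne hq)

lemma pauliTensor_mul_comm_or {n : ℕ} (f g : Fin n → Fin 4) :
    ∃ s : ℂ, (s = 1 ∨ s = -1) ∧
      pauliTensor n f * pauliTensor n g = s • (pauliTensor n g * pauliTensor n f) := by
  choose s hs hmul using fun q => pauliMat_mul_comm_or (f q) (g q)
  refine ⟨∏ q, s q, ?_, ?_⟩
  · refine Finset.prod_induction s (fun x => x = 1 ∨ x = -1) ?_ (Or.inl rfl) (fun q _ => hs q)
    rintro _ _ (rfl | rfl) (rfl | rfl) <;> simp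
  · ext i k
    rw [Matrix.smul_apply, pauliTensor_mul_apply, pauliTensor_mul_apply, smul_eq_mul,
      ← Finset.prod_mul_distrib]
    refine Finset.prod_congr rfl fun q _ => ?_
    rw [hmul, Matrix.smul_apply, smul_eq_mul]

lemma IsPauli.mul_self {n : ℕ} {M : Mat n} (h : IsPauli n M) : M * M = 1 := by
  obtain ⟨ε, f, hε | hε, rfl⟩ := h <;> subst hε <;> simp [pauliTensor_mul_self]

lemma IsPauli.commute_or_antiCommute {n : ℕ} {M N : Mat n} (hM : IsPauli n M)
    (hN : IsPauli n N) : Commute M N ∨ PAntiCommute M N := by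
  obtain ⟨ε, f, -, rfl⟩ := hM
  obtain ⟨δ, g, -, rfl⟩ := hN
  obtain ⟨s, hs, h⟩ := pauliTensor_mul_comm_or f g
  simp only [commute_iff_eq, PAntiCommute, smul_mul_smul_comm, h, mul_comm δ ε]
  rcases hs with rfl | rfl
  · left; simp
  · right; simp

lemma Mat.ne_neg_self {n : ℕ} {M : Mat n} (h : M * M = 1) : M ≠ -M := by
  intro hM
  have h0 : M = 0 := by
    ext i j
    have := congrFun (congrFun hM i) j
    rw [Matrix.neg_apply] at this
    exact self_eq_neg.mp this
  rw [h0, mul_zero] at h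
  exact zero_ne_one h

/-! ### Products of involutions over multisets -/

lemma prod_map_mul_self {α K : Type*} [CommMonoid K] (f : α → K) (hf : ∀ x, f x * f x = 1)
    (m : Multiset α) : (m.map f).prod * (m.map f).prod = 1 := by
  rw [← Multiset.prod_map_mul]
  simp [hf]

open scoped Classical in
/-- In a commutative monoid, a product of involutions depends only on the factors of odd
multiplicity. -/
lemma prod_map_eq_of_odd_count_iff {α K : Type*} [CommMonoid K] (f : α → K)
    (hf : ∀ x, f x * f x = 1) (m m' : Multiset α)
    (h : ∀ x, Odd (m.count x) ↔ Odd (m'.count x)) : (m.map f).prod = (m'.map f).prod := by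
  have key : (m.map f).prod * (m'.map f).prod = 1 := by
    rw [← Multiset.prod_add, ← Multiset.map_add, Finset.prod_multiset_map_count]
    refine Finset.prod_eq_one fun x _ => ?_
    obtain ⟨k, hk⟩ : Even ((m + m').count x) := by
      rw [Multiset.count_add, Nat.even_add, ← Nat.not_odd_iff_even, ← Nat.not_odd_iff_even, h x]
    rw [hk, ← two_mul, pow_mul, pow_two, hf, one_pow]
  calc (m.map f).prod = (m.map f).prod * ((m'.map f).prod * (m'.map f).prod) := by
        rw [prod_map_mul_self f hf, mul_one]
    _ = (m'.map f).prod := by rw [← mul_assoc, key, one_mul]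

/-! ### Labels of determining trees -/

/-- The label of a determining tree factors as an element of `ρ` times a product over the leaves,
provided that every element of `T` factors in this way, that products of commuting elements of `ρ`
stay in `ρ`, and that the remaining factors are commuting involutions, coming from a commutative
monoid `K` mapped by `ι`, that commute with `ρ`. -/
lemma PTree.Valid.label_eq {n : ℕ} {T : Set (Mat n)} {ρ : Set (Mat n)} {K : Type*} [CommMonoid K]
    (ι : K →* Mat n) (z : Mat n → K) (hone : 1 ∈ ρ)
    (hmul : ∀ a ∈ ρ, ∀ b ∈ ρ, Commute a b → a * b ∈ ρ)
    (hcomm : ∀ k, ∀ a ∈ ρ, Commute (ι k) a)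
    (hz : ∀ M, z M * z M = 1)
    (hT : ∀ M ∈ T, ∃ a ∈ ρ, M = a * ι (z M)) {τ : PTree n} (hτ : PTree.Valid T τ) :
    ∃ a ∈ ρ, τ.label = a * ι (τ.leaves.map z).prod := by
  induction hτ with
  | leaf hM =>
    obtain ⟨a, ha, h⟩ := hT _ hM
    exact ⟨a, ha, by simpa [PTree.label, PTree.leaves] using h⟩
  | @node M cs _ hprod hpw hvalid ih =>
    simp only [PTree.label, PTree.leaves, hprod]
    clear hprod
    induction cs with
    | nil => exact ⟨1, hone, by simp [PTree.leavesList]⟩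
    | cons c cs ihcs =>
      rw [List.pairwise_cons] at hpw
      obtain ⟨b, hb, hbl⟩ := ihcs hpw.2
        (fun c hc => hvalid c (List.mem_cons_of_mem _ hc))
        (fun c hc => ih c (List.mem_cons_of_mem _ hc))
      obtain ⟨a, ha, hal⟩ := ih c List.mem_cons_self
      have hc : Commute c.label (cs.map PTree.label).prod := by
        refine Commute.list_prod_right _ _ fun y hy => ?_
        obtain ⟨d, hd, rfl⟩ := List.mem_map.mp hy
        exact hpw.1 d hd
      rw [hal, hbl] at hc
      have hP := prod_map_mul_self z hz c.leaves
      have hQ := prod_map_mul_self z hz (PTree.leavesList cs)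
      simp only [List.map_cons, List.prod_cons, PTree.leavesList, Multiset.map_add,
        Multiset.prod_add, hal, hbl]
      set p := (c.leaves.map z).prod
      set q := ((PTree.leavesList cs).map z).prod
      -- `ι p` and `ι q` are involutions commuting with `a` and `b`, so they cancel from `hc`.
      have hab : Commute a b := by
        have hpp : ι p * ι p = 1 := by rw [← map_mul, hP, map_one]
        have hqq : ι q * ι q = 1 := by rw [← map_mul, hQ, map_one]
        have hpq : Commute (ι p) (ι q) := (Commute.all p q).map ι
        have h1 : Commute (a * ι p * ι p) (b * ι q) :=
          hc.mul_left ((hcomm p b hb).mul_right hpq)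
        rw [mul_assoc, hpp, mul_one] at h1
        have h2 : Commute a (b * ι q * ι q) := h1.mul_right (hcomm q a ha).symm
        rwa [mul_assoc, hqq, mul_one] at h2
      refine ⟨a * b, hmul a ha b hb hab, ?_⟩
      rw [map_mul, mul_assoc, ← mul_assoc (ι p), (hcomm p b hb).eq]
      simp only [mul_assoc]

open scoped IsMulCommutative in
/-- The hypotheses on `ρ` hold for `1` together with the clique representatives when `T` is not
commutative, and for `{1}` when it is. Keeping `ρ` and `r` abstract treats both cases at once:
the factor `r M * M` plays the role of `z_M`, and `hneg` excludes trees for `A` and `-A` with the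
same product over the leaves. -/
lemma not_contextual_of_representatives {n : ℕ} {T : Set (Mat n)} (ρ : Set (Mat n))
    (r : Mat n → Mat n) (hsq : ∀ M ∈ T, M * M = 1) (hone : 1 ∈ ρ)
    (hmul : ∀ a ∈ ρ, ∀ b ∈ ρ, Commute a b → a * b ∈ ρ)
    (hneg : ∀ a ∈ ρ, ∀ b ∈ ρ, a ≠ -b)
    (hr : ∀ M ∈ T, r M ∈ ρ) (hrr : ∀ M ∈ T, r M * r M = 1) (hrM : ∀ M ∈ T, Commute (r M) M)
    (hzT : ∀ M ∈ T, ∀ N ∈ T, Commute (r M * M) N)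
    (hzρ : ∀ M ∈ T, ∀ a ∈ ρ, Commute (r M * M) a) : ¬ Contextual n T := by
  classical
  rintro ⟨A, τ, τ', -, ⟨hv, hl⟩, ⟨hv', hl'⟩, hdet⟩
  let Z : Set (Mat n) := {x | ∃ M ∈ T, x = r M * M}
  have hZ : ∀ x ∈ Z, ∀ y ∈ Z, x * y = y * x := by
    rintro _ ⟨M, hM, rfl⟩ _ ⟨N, hN, rfl⟩
    exact (hzρ M hM _ (hr N hN)).mul_right (hzT M hM N hN)
  have : IsMulCommutative (Submonoid.closure Z) := Submonoid.isMulCommutative_closure _ hZ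
  let ι : Submonoid.closure Z →* Mat n := (Submonoid.closure Z).subtype
  let z : Mat n → Submonoid.closure Z := fun M =>
    if h : M ∈ T then ⟨r M * M, Submonoid.subset_closure ⟨M, h, rfl⟩⟩ else 1
  have hcomm : ∀ k, ∀ a ∈ ρ, Commute (ι k) a := by
    rintro ⟨k, hk⟩ a ha
    change Commute k a
    induction hk using Submonoid.closure_induction with
    | mem x hx => obtain ⟨M, hM, rfl⟩ := hx; exact hzρ M hM a ha
    | one => exact Commute.one_left a
    | mul x y _ _ hx hy => exact hx.mul_left hy
  have hz : ∀ M, z M * z M = 1 := by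
    intro M
    by_cases h : M ∈ T
    · apply Subtype.ext
      simp only [z, dif_pos h]
      change r M * M * (r M * M) = 1
      rw [mul_assoc, ← mul_assoc M, ← (hrM M h).eq, mul_assoc, hsq M h, mul_one, hrr M h]
    · simp [z, h]
  have hfac : ∀ M ∈ T, ∃ a ∈ ρ, M = a * ι (z M) := by
    intro M h
    refine ⟨r M, hr M h, ?_⟩
    simp only [z, dif_pos h]
    change M = r M * (r M * M)
    rw [← mul_assoc, hrr M h, one_mul]
  obtain ⟨a, ha, hal⟩ := hv.label_eq ι z hone hmul hcomm hz hfac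
  obtain ⟨b, hb, hbl⟩ := hv'.label_eq ι z hone hmul hcomm hz hfac
  have hP : (τ.leaves.map z).prod = (τ'.leaves.map z).prod :=
    prod_map_eq_of_odd_count_iff z hz _ _ fun M => by
      -- `convert` identifies the different decidability instances inside `count`.
      have hM : M ∈ τ.detSet ↔ M ∈ τ'.detSet := by rw [hdet]
      simp only [PTree.detSet, Set.mem_ofPred_eq] at hM
      convert hM
  have hPP := prod_map_mul_self z hz τ'.leaves
  rw [hP, hl] at hal
  rw [hl'] at hbl
  set p := (τ'.leaves.map z).prod
  have hpp : ι p * ι p = 1 := by rw [← map_mul, hPP, map_one]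
  have h1 : a = A * ι p := by rw [hal, mul_assoc, hpp, mul_one]
  have h2 : b = -A * ι p := by rw [hbl, mul_assoc, hpp, mul_one]
  exact hneg a ha b hb (by rw [h1, h2, neg_mul, neg_neg])

/-! ### Cliques and their representatives -/

/-- Lemma 2.2: If the compatibility graph of a set `T` of Pauli
operators is a disjoint union of cliques (equivalently, commutation is
transitive on `T`), then `T` is noncontextual. -/
theorem noncontextual_of_commute_transitive {n : ℕ} (T : Set (Mat n))
    (hT : ∀ M ∈ T, IsPauli n M)
    (htrans : ∀ A ∈ T, ∀ B ∈ T, ∀ C ∈ T, Commute A B → Commute B C → Commute A C) :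
    ¬ Contextual n T := by
  have hsq : ∀ M ∈ T, M * M = 1 := fun M hM => (hT M hM).mul_self
  by_cases hall : ∀ M ∈ T, ∀ N ∈ T, Commute M N
  · refine not_contextual_of_representatives {1} (fun _ => 1) hsq rfl ?_ ?_ ?_ ?_ ?_ ?_ ?_
    · rintro a rfl b rfl _; simp
    · rintro a rfl b rfl; exact Mat.ne_neg_self (one_mul 1)
    · intro M _; rfl
    · intro M _; exact one_mul 1
    · intro M _; exact Commute.one_left M
    · intro M hM N hN; simpa using hall M hM N hN
    · rintro M _ a rfl; exact Commute.one_right _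
  · classical
    -- The cliques are the classes of `s`.
    let s : Setoid T :=
      { r := fun M N => Commute M.1 N.1
        iseqv := ⟨fun M => Commute.refl M.1, fun h => h.symm,
          fun {M N P} h h' => htrans _ M.2 _ N.2 _ P.2 h h'⟩ }
    let r : Mat n → Mat n := fun M =>
      if h : M ∈ T then ((Quotient.mk s ⟨M, h⟩).out : T).1 else 1
    have hrT : ∀ M ∈ T, r M ∈ T := by
      intro M h; simp only [r, dif_pos h]; exact Subtype.coe_prop _
    have hrM : ∀ M ∈ T, Commute (r M) M := by
      intro M h; simp only [r, dif_pos h]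
      exact Quotient.mk_out (s := s) ⟨M, h⟩
    have hreq : ∀ M ∈ T, ∀ N ∈ T, Commute M N → r M = r N := by
      intro M hM N hN h
      have : Quotient.mk s ⟨M, hM⟩ = Quotient.mk s ⟨N, hN⟩ := Quotient.sound h
      simp only [r, dif_pos hM, dif_pos hN, this]
    have hreps : ∀ M ∈ T, ∀ N ∈ T, Commute (r M) (r N) → r M = r N := by
      intro M hM N hN h
      refine hreq M hM N hN ?_
      exact htrans _ hM _ (hrT M hM) _ hN (hrM M hM).symm
        (htrans _ (hrT M hM) _ (hrT N hN) _ hN h (hrM N hN))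
    have hne : ∀ R ∈ T, R ≠ -1 := by
      rintro _ hR rfl
      exact hall fun M hM N hN => htrans M hM (-1) hR N hN
        (Commute.one_right M).neg_right (Commute.one_left N).neg_left
    have hzT : ∀ M ∈ T, ∀ N ∈ T, Commute (r M * M) N := by
      intro M hM N hN
      rcases (hT M hM).commute_or_antiCommute (hT N hN) with h | h
      · exact (htrans _ (hrT M hM) _ hM _ hN (hrM M hM) h).mul_left h
      · rcases (hT _ (hrT M hM)).commute_or_antiCommute (hT N hN) with hR | hR
        · exact hR.mul_left (htrans _ hM _ (hrT M hM) _ hN (hrM M hM).symm hR)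
        · -- `N` anticommutes with both factors, so the two signs cancel.
          unfold PAntiCommute at h hR
          rw [commute_iff_eq, mul_assoc, h, mul_neg, ← mul_assoc, hR, neg_mul, neg_neg, mul_assoc]
    refine not_contextual_of_representatives (insert 1 (r '' T)) r hsq (Set.mem_insert _ _)
      ?_ ?_ (fun M hM => Or.inr ⟨M, hM, rfl⟩) (fun M hM => hsq _ (hrT M hM)) hrM hzT ?_
    · rintro a (rfl | ⟨M, hM, rfl⟩) b (rfl | ⟨N, hN, rfl⟩) h
      · exact Or.inl (one_mul 1)
      · rw [one_mul]; exact Or.inr ⟨N, hN, rfl⟩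
      · rw [mul_one]; exact Or.inr ⟨M, hM, rfl⟩
      · rw [hreps M hM N hN h]; exact Or.inl (hsq _ (hrT N hN))
    · rintro a (rfl | ⟨M, hM, rfl⟩) b (rfl | ⟨N, hN, rfl⟩) h
      · exact Mat.ne_neg_self (one_mul 1) h
      · exact hne _ (hrT N hN) (by rw [h, neg_neg])
      · exact hne _ (hrT M hM) h
      · have hc : Commute (r M) (r N) := by rw [h]; exact (Commute.refl (r N)).neg_left
        rw [hreps M hM N hN hc] at h
        exact Mat.ne_neg_self (hsq _ (hrT N hN)) h
    · rintro M hM a (rfl | ⟨N, hN, rfl⟩)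
      · exact Commute.one_right _
      · exact hzT M hM _ (hrT N hN)
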